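/- Let S be a numerical semigroup with msg(S) = {n₁ < n₂ < ⋯ < n_e < n_{e+1}}, e ≥ 2, let S' = ⟨n₁, n₂, …, n_e⟩, and write Ap(S', n₁) = {w'(0), w'(1), …, w'(n₁−1)}. Then S is a MANS-semigroup if and only if: (1) S' is a MANS-semigroup, (2) n_e mod n₁ < n_{e+1} mod n₁, and (3) w'((n_{e+1} mod n₁) − 1) < n_{e+1} < w'(n_{e+1} mod n₁). -/

import Mathlib

/-- `S ⊆ ℕ` is a numerical semigroup: contains `0`, closed under addition,
and has finite complement in `ℕ`. -/
def IsNumSgp (S : Set ℕ) : Prop :=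
  0 ∈ S ∧ (∀ a ∈ S, ∀ b ∈ S, a + b ∈ S) ∧ Sᶜ.Finite

/-- `⟨A⟩`: the additive submonoid of `ℕ` generated by `A`, viewed as a set. -/
def gen (A : Set ℕ) : Set ℕ := (AddSubmonoid.closure A : Set ℕ)

/-- The multiplicity `m(S)`: the least nonzero element of `S`. -/
noncomputable def nsMult (S : Set ℕ) : ℕ := sInf {x | x ∈ S ∧ x ≠ 0}

/-- The minimal system of generators of `S`: the nonzero elements of `S` that are
not a sum of two nonzero elements of `S`. -/
def msg (S : Set ℕ) : Set ℕ :=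
  {x | x ∈ S ∧ x ≠ 0 ∧ ∀ a ∈ S, a ≠ 0 → ∀ b ∈ S, b ≠ 0 → x ≠ a + b}

/-- The ratio `r(S)`: the second smallest minimal generator of `S`. -/
noncomputable def nsRatio (S : Set ℕ) : ℕ := sInf (msg S \ {nsMult S})

/-- The maximum minimal generator `M(S)`. -/
noncomputable def nsMaxGen (S : Set ℕ) : ℕ := sSup (msg S)

/-- The Apéry set `Ap(S, n) = {s ∈ S : s - n ∉ S}`. -/
def AperySet (S : Set ℕ) (n : ℕ) : Set ℕ :=
  {s | s ∈ S ∧ ¬ ∃ y ∈ S, y + n = s}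

/-- `w(i)`: the least element of `S` congruent to `i` modulo `n`. -/
noncomputable def aperyW (S : Set ℕ) (n i : ℕ) : ℕ :=
  sInf {s | s ∈ S ∧ s % n = i % n}

/-- A MANS-semigroup: a numerical semigroup whose Apéry set with respect to the
multiplicity is monotone, i.e. `w(1) < w(2) < ⋯ < w(m(S) - 1)`. -/
def IsMANS (S : Set ℕ) : Prop :=
  IsNumSgp S ∧ ∀ i : ℕ, 0 < i → i + 1 < nsMult S →
    aperyW S (nsMult S) i < aperyW S (nsMult S) (i + 1)

/-- The Frobenius number `F(S)`: the greatest integer not in `S`. -/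
noncomputable def nsFrob (S : Set ℕ) : ℕ := sSup {x | x ∉ S}

/-- The genus `g(S)`: the number of gaps of `S`. -/
noncomputable def nsGenus (S : Set ℕ) : ℕ := Set.ncard {x | x ∉ S}

/-- The set of pseudo-Frobenius numbers of `S`: integers `x ∉ S` such that
`x + s ∈ S` for every nonzero `s ∈ S`. -/
def nsPF (S : Set ℕ) : Set ℤ :=
  {x : ℤ | x ∉ ((Nat.cast : ℕ → ℤ) '' S) ∧
    ∀ s ∈ S, s ≠ 0 → x + (s : ℤ) ∈ ((Nat.cast : ℕ → ℤ) '' S)}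

/-- The type `t(S)`: the number of pseudo-Frobenius numbers of `S`. -/
noncomputable def nsType (S : Set ℕ) : ℕ := (nsPF S).ncard

/-- `S` is pseudo-symmetric iff `F(S) = 2 g(S) - 2`. -/
def IsPseudoSymmetric (S : Set ℕ) : Prop :=
  (nsFrob S : ℤ) = 2 * (nsGenus S : ℤ) - 2

/-!
Write `m = n₁`, `M = n_{e+1}`. The Apéry set of `S` is monotone iff every `s ∈ S` with `m ∤ s` has
a *predecessor modulo `m`*: a smaller element of `S` congruent to `s - 1`. Adding an element of `S`
to `s` and to its predecessor shows that it suffices to check this on generators. As `S` and `S'`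
agree below `M`, passing from `S'` to `S` adds only the condition at `M`, which is
`w'(M mod m - 1) < M`. The remaining conditions follow because `M`, a minimal generator, is the
least element of `S` in its residue class and does not lie in `S'`: elements of `S'` in that class
exceed `M`, and descending through predecessors from `n_e < M` cannot reach it, so
`n_e mod m < M mod m`. Descending from `n_e` does reach residue `1`, whence `S'` is cofinite.
-/

theorem add_one_modEq_iff {m s y : ℕ} (hs : ¬m ∣ s) : y + 1 ≡ s [MOD m] ↔ y % m + 1 = s % m := by
  rw [Nat.dvd_iff_mod_eq_zero] at hs
  have hmod : (y + 1) % m = (y % m + 1) % m := (Nat.mod_add_mod y m 1).symm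
  rw [Nat.ModEq, hmod]
  rcases m.eq_zero_or_pos with rfl | hm
  · simp only [Nat.mod_zero]
  rcases (Nat.add_one_le_of_lt (Nat.mod_lt y hm)).lt_or_eq with hlt | heq
  · rw [Nat.mod_eq_of_lt hlt]
  · have hsm := Nat.mod_lt s hm
    rw [heq, Nat.mod_self]
    exact iff_of_false (Ne.symm hs) hsm.ne'

theorem range_castSucc_eq_inter_Iio {α : Type*} [Preorder α] {e : ℕ} {n : Fin (e + 1) → α}
    (hn : StrictMono n) :
    Set.range (fun i : Fin e => n i.castSucc) = Set.range n ∩ Set.Iio (n (Fin.last e)) := by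
  ext x
  constructor
  · rintro ⟨i, rfl⟩
    exact ⟨⟨_, rfl⟩, hn i.castSucc_lt_last⟩
  · rintro ⟨⟨i, rfl⟩, hi⟩
    exact ⟨i.castPred (hn.lt_iff_lt.1 hi).ne, by simp only [Fin.castSucc_castPred]⟩

section Apery

variable {S : Set ℕ} {m : ℕ}

theorem aperyW_mod (S : Set ℕ) (m i : ℕ) : aperyW S m (i % m) = aperyW S m i := by
  simp only [aperyW, Nat.mod_mod]

theorem aperyW_le {i s : ℕ} (hs : s ∈ S) (h : s ≡ i [MOD m]) : aperyW S m i ≤ s :=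
  Nat.sInf_le ⟨hs, h⟩

theorem aperyW_spec (hS : Sᶜ.Finite) (hm : m ≠ 0) (i : ℕ) :
    aperyW S m i ∈ S ∧ aperyW S m i ≡ i [MOD m] := by
  have hmem : ∀ᶠ s in Filter.atTop, s ∈ S := by
    rw [← Nat.cofinite_eq_atTop]
    exact hS
  obtain ⟨s, hsi, hs⟩ := ((Nat.frequently_modEq hm i).and_eventually hmem).exists
  exact Nat.sInf_mem (s := {s | s ∈ S ∧ s % m = i % m}) ⟨s, hs, hsi⟩

theorem aperyW_lt_iff (hS : Sᶜ.Finite) (hm : m ≠ 0) {i b : ℕ} :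
    aperyW S m i < b ↔ ∃ y ∈ S, y < b ∧ y ≡ i [MOD m] := by
  obtain ⟨hmem, hmod⟩ := aperyW_spec hS hm i
  exact ⟨fun h => ⟨_, hmem, h, hmod⟩, fun ⟨y, hy, hyb, hyi⟩ => (aperyW_le hy hyi).trans_lt hyb⟩

end Apery

section ModPred

/-- `s` has a predecessor modulo `m` in `S`: a smaller element of `S` congruent to `s - 1`. -/
def HasModPred (S : Set ℕ) (m s : ℕ) : Prop :=
  ∃ y ∈ S, y < s ∧ y + 1 ≡ s [MOD m]

/-- Every element of `S` that is not divisible by `m` has a predecessor modulo `m` in `S`. For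
`m = m(S)` this reformulates the monotonicity of the Apéry set; unlike the latter, it can be
tested on generators. -/
def ModPredClosed (S : Set ℕ) (m : ℕ) : Prop :=
  ∀ s ∈ S, ¬m ∣ s → HasModPred S m s

variable {S T : Set ℕ} {m s : ℕ}

theorem HasModPred.mono (hST : S ⊆ T) (h : HasModPred S m s) : HasModPred T m s :=
  let ⟨y, hy, hys⟩ := h
  ⟨y, hST hy, hys⟩

theorem hasModPred_iff_aperyW_lt (hS : Sᶜ.Finite) (hm : m ≠ 0) (hs : ¬m ∣ s) :
    HasModPred S m s ↔ aperyW S m (s % m - 1) < s := by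
  rw [aperyW_lt_iff hS hm]
  have hlt := Nat.mod_lt s (Nat.pos_of_ne_zero hm)
  have hpos : 1 ≤ s % m := Nat.one_le_iff_ne_zero.2 (mt Nat.dvd_of_mod_eq_zero hs)
  have hiff (y : ℕ) : y + 1 ≡ s [MOD m] ↔ y ≡ s % m - 1 [MOD m] := by
    rw [add_one_modEq_iff hs, Nat.ModEq, Nat.mod_eq_of_lt (by omega : s % m - 1 < m),
      eq_tsub_iff_add_eq_of_le hpos]
  simp only [HasModPred, hiff]

theorem HasModPred.add_left {S : AddSubmonoid ℕ} {a : ℕ} (ha : a ∈ S) (h : HasModPred S m s) :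
    HasModPred S m (a + s) := by
  obtain ⟨y, hy, hys, hmod⟩ := h
  exact ⟨a + y, add_mem ha hy, by omega, by simpa only [add_assoc] using hmod.add_left a⟩

theorem modPredClosed_closure {A : Set ℕ}
    (h : ∀ s ∈ A, ¬m ∣ s → HasModPred (AddSubmonoid.closure A) m s) :
    ModPredClosed (AddSubmonoid.closure A) m := by
  intro s hs
  induction hs using AddSubmonoid.closure_induction with
  | mem s hs => exact h s hs
  | zero => exact fun h0 => absurd (dvd_zero m) h0
  | add a b ha hb iha ihb =>
    intro hab
    by_cases hma : m ∣ a
    · exact (ihb fun hmb => hab (dvd_add hma hmb)).add_left ha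
    · rw [add_comm]
      exact (iha hma).add_left hb

theorem ModPredClosed.exists_le_mod_eq (h : ModPredClosed S m) {k : ℕ} (hs : s ∈ S)
    (hk : k ≤ s % m) : ∃ y ∈ S, y ≤ s ∧ y % m = k := by
  induction s using Nat.strong_induction_on with
  | _ s ih =>
    rcases hk.eq_or_lt with rfl | hk
    · exact ⟨s, hs, le_rfl, rfl⟩
    have hms : ¬m ∣ s := fun hms => by simp [Nat.mod_eq_zero_of_dvd hms] at hk
    obtain ⟨y, hy, hys, hmod⟩ := h s hs hms
    rw [add_one_modEq_iff hms] at hmod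
    obtain ⟨z, hz, hzy, hzk⟩ := ih y hys hy (by omega)
    exact ⟨z, hz, hzy.trans hys.le, hzk⟩

end ModPred

section MinimalGenerators

variable {S : Set ℕ}

theorem nsMult_mem_msg_of_exists_ne_zero (hS : ∃ s ∈ S, s ≠ 0) : nsMult S ∈ msg S := by
  obtain ⟨hmem, hne⟩ : nsMult S ∈ S ∧ nsMult S ≠ 0 := Nat.sInf_mem hS
  refine ⟨hmem, hne, fun a ha ha0 b _ hb0 hab => ?_⟩
  have hle : nsMult S ≤ a := Nat.sInf_le ⟨ha, ha0⟩
  omega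

theorem nsMult_eq_of_isLeast_msg {m : ℕ} (hm : IsLeast (msg S) m) : nsMult S = m :=
  le_antisymm (Nat.sInf_le ⟨hm.1.1, hm.1.2.1⟩)
    (hm.2 (nsMult_mem_msg_of_exists_ne_zero ⟨m, hm.1.1, hm.1.2.1⟩))

theorem nsMult_eq_of_subset {T : Set ℕ} (hTS : T ⊆ S) (hmem : nsMult S ∈ T)
    (hne : nsMult S ≠ 0) : nsMult T = nsMult S :=
  IsLeast.csInf_eq ⟨⟨hmem, hne⟩, fun _ ht => Nat.sInf_le ⟨hTS ht.1, ht.2⟩⟩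

theorem mem_closure_msg_inter_Iic {s : ℕ} (hs : s ∈ S) :
    s ∈ AddSubmonoid.closure (msg S ∩ Set.Iic s) := by
  induction s using Nat.strong_induction_on with
  | _ s ih =>
    have hmono {a : ℕ} (has : a ≤ s) : AddSubmonoid.closure (msg S ∩ Set.Iic a) ≤
        AddSubmonoid.closure (msg S ∩ Set.Iic s) :=
      AddSubmonoid.closure_mono (Set.inter_subset_inter_right _ (Set.Iic_subset_Iic.2 has))
    by_cases hmsg : s ∈ msg S
    · exact AddSubmonoid.subset_closure ⟨hmsg, Set.self_mem_Iic⟩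
    rcases eq_or_ne s 0 with rfl | h0
    · exact zero_mem _
    obtain ⟨a, ha, ha0, b, hb, hb0, rfl⟩ :
        ∃ a ∈ S, a ≠ 0 ∧ ∃ b ∈ S, b ≠ 0 ∧ s = a + b := by
      by_contra! hirr
      exact hmsg ⟨hs, h0, hirr⟩
    exact add_mem (hmono (by omega) (ih a (by omega) ha)) (hmono (by omega) (ih b (by omega) hb))

theorem closure_msg (S : AddSubmonoid ℕ) : AddSubmonoid.closure (msg S) = S :=
  le_antisymm (AddSubmonoid.closure_le.2 fun _ hx => hx.1) fun _ hs =>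
    AddSubmonoid.closure_mono Set.inter_subset_left (mem_closure_msg_inter_Iic hs)

theorem notMem_closure_of_mem_msg {S : AddSubmonoid ℕ} {g : ℕ} {A : Set ℕ} (hg : g ∈ msg S)
    (hA : A ⊆ S) (hgA : g ∉ A) : g ∉ AddSubmonoid.closure A := by
  suffices h : ∀ s ∈ AddSubmonoid.closure A, s ∈ S ∧ s ≠ g from fun hmem => (h g hmem).2 rfl
  intro s hs
  induction hs using AddSubmonoid.closure_induction with
  | mem s hs => exact ⟨hA hs, fun hsg => hgA (hsg ▸ hs)⟩
  | zero => exact ⟨zero_mem S, hg.2.1.symm⟩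
  | add a b _ _ iha ihb =>
    refine ⟨add_mem iha.1 ihb.1, fun hab => ?_⟩
    rcases eq_or_ne a 0 with rfl | ha
    · exact ihb.2 (by simpa using hab)
    rcases eq_or_ne b 0 with rfl | hb
    · exact iha.2 (by simpa using hab)
    exact hg.2.2 a iha.1 ha b ihb.1 hb hab.symm

theorem eq_of_mem_msg_of_modEq {S : AddSubmonoid ℕ} {m g y : ℕ} (hm : m ∈ S) (hg : g ∈ msg S)
    (hgm : g ≠ m) (hy : y ∈ S) (hyg : y ≤ g) (hmod : y ≡ g [MOD m]) : y = g := by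
  obtain ⟨t, ht⟩ := (Nat.modEq_iff_dvd' hyg).1 hmod
  have hgt : g = y + m * t := by omega
  rcases t with _ | t
  · simpa using hgt.symm
  rcases eq_or_ne m 0 with rfl | hm0
  · simpa using hgt.symm
  have hsplit : g = m + (y + t • m) := by rw [hgt, smul_eq_mul]; ring
  have hne : y + t • m ≠ 0 := by omega
  exact absurd hsplit (hg.2.2 m hm hm0 _ (add_mem hy (nsmul_mem hm t)) hne)

theorem not_dvd_of_mem_msg {S : AddSubmonoid ℕ} {m g : ℕ} (hm : m ∈ S) (hg : g ∈ msg S)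
    (hgm : g ≠ m) : ¬m ∣ g := fun hdvd =>
  hg.2.1 (eq_of_mem_msg_of_modEq hm hg hgm (zero_mem S) g.zero_le
    (Nat.modEq_zero_iff_dvd.2 hdvd).symm).symm

end MinimalGenerators

section NumericalSemigroups

theorem isNumSgp_of_coprime {S : AddSubmonoid ℕ} {a b : ℕ} (ha : a ∈ S) (hb : b ∈ S)
    (hab : Nat.Coprime a b) : IsNumSgp S := by
  have hgcd : Nat.setGcd (S : Set ℕ) = 1 := Nat.eq_one_of_dvd_coprimes hab
    (Nat.setGcd_dvd_of_mem ha) (Nat.setGcd_dvd_of_mem hb)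
  obtain ⟨c, hc⟩ := Nat.exists_mem_closure_of_ge (S : Set ℕ)
  simp only [hgcd, one_dvd, AddSubmonoid.closure_eq, forall_const] at hc
  refine ⟨zero_mem S, fun a ha b hb => add_mem ha hb, (Set.finite_Iio c).subset fun s hs => ?_⟩
  exact lt_of_not_ge fun hcs => hs (hc s hcs)

theorem ModPredClosed.isNumSgp {S : AddSubmonoid ℕ} {m s : ℕ} (h : ModPredClosed S m)
    (hm : m ∈ S) (hs : s ∈ S) (hms : ¬m ∣ s) : IsNumSgp S := by
  obtain ⟨y, hy, -, hy1⟩ := h.exists_le_mod_eq hs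
    (Nat.one_le_iff_ne_zero.2 (mt Nat.dvd_of_mod_eq_zero hms))
  refine isNumSgp_of_coprime hm hy ?_
  rw [Nat.Coprime, Nat.gcd_rec, hy1, Nat.gcd_one_left]

theorem IsNumSgp.nsMult_mem_msg {S : Set ℕ} (hS : IsNumSgp S) : nsMult S ∈ msg S := by
  have hinf : S.Infinite := compl_compl S ▸ hS.2.2.infinite_compl
  obtain ⟨s, hs, hs0⟩ := hinf.exists_gt 0
  exact nsMult_mem_msg_of_exists_ne_zero ⟨s, hs, hs0.ne'⟩

theorem isMANS_iff_modPredClosed {S : Set ℕ} (hS : IsNumSgp S) :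
    IsMANS S ↔ ModPredClosed S (nsMult S) := by
  have hm : nsMult S ≠ 0 := hS.nsMult_mem_msg.2.1
  set m := nsMult S with hm_def
  rw [IsMANS, ← hm_def, and_iff_right hS]
  constructor
  · intro hmono s hs hms
    have hlt := Nat.mod_lt s (Nat.pos_of_ne_zero hm)
    have hpos : s % m ≠ 0 := mt Nat.dvd_of_mod_eq_zero hms
    have hle : aperyW S m (s % m) ≤ s := aperyW_le hs (Nat.mod_modEq s m).symm
    rw [hasModPred_iff_aperyW_lt hS.2.2 hm hms]
    obtain ⟨r, hr⟩ := Nat.exists_eq_add_one_of_ne_zero hpos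
    rw [hr] at hle hlt ⊢
    rw [Nat.add_sub_cancel]
    rcases eq_or_ne r 0 with rfl | hr0
    · exact (aperyW_le hS.1 rfl).trans_lt (Nat.pos_of_ne_zero fun h0 => hms (h0 ▸ dvd_zero m))
    · exact (hmono r (Nat.pos_of_ne_zero hr0) hlt).trans_le hle
  · intro h i _ hi
    obtain ⟨hmem, hmod⟩ := aperyW_spec hS.2.2 hm (i + 1)
    have hmod : aperyW S m (i + 1) % m = i + 1 := Nat.mod_eq_of_modEq hmod hi
    have hms : ¬m ∣ aperyW S m (i + 1) := by rw [Nat.dvd_iff_mod_eq_zero]; omega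
    simpa only [hmod, Nat.add_sub_cancel] using
      (hasModPred_iff_aperyW_lt hS.2.2 hm hms).1 (h _ hmem hms)

end NumericalSemigroups

section GenBelow

/-- The submonoid generated by the minimal generators of `S` smaller than `M`. When `M` is the
largest minimal generator of `S`, this is the semigroup `S'` of the paper. -/
def genBelow (S : Set ℕ) (M : ℕ) : AddSubmonoid ℕ :=
  AddSubmonoid.closure (msg S ∩ Set.Iio M)

variable {S : AddSubmonoid ℕ} {m M : ℕ}

theorem genBelow_le (S : AddSubmonoid ℕ) (M : ℕ) : genBelow S M ≤ S :=
  AddSubmonoid.closure_le.2 fun _ hx => hx.1.1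

theorem mem_genBelow_of_lt {S : Set ℕ} {s : ℕ} (hs : s ∈ S) (hsM : s < M) : s ∈ genBelow S M :=
  AddSubmonoid.closure_mono (Set.inter_subset_inter_right _ (Set.Iic_subset_Iio.2 hsM))
    (mem_closure_msg_inter_Iic hs)

theorem hasModPred_genBelow {S : Set ℕ} {s : ℕ} (h : HasModPred S m s) (hsM : s ≤ M) :
    HasModPred (genBelow S M) m s :=
  let ⟨y, hy, hys, hmod⟩ := h
  ⟨y, mem_genBelow_of_lt hy (hys.trans_le hsM), hys, hmod⟩

theorem modPredClosed_genBelow {S : Set ℕ} (h : ModPredClosed S m) :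
    ModPredClosed (genBelow S M) m :=
  modPredClosed_closure fun s hs hms => hasModPred_genBelow (h s hs.1.1 hms) hs.2.le

theorem modPredClosed_of_genBelow (hM : M ∈ upperBounds (msg S))
    (h : ModPredClosed (genBelow S M) m) (hpred : HasModPred (genBelow S M) m M) :
    ModPredClosed S m := by
  rw [← closure_msg S]
  refine modPredClosed_closure fun s hs hms => ?_
  rw [closure_msg S]
  rcases (hM hs).lt_or_eq with hsM | rfl
  · exact (h s (mem_genBelow_of_lt hs.1 hsM) hms).mono (genBelow_le S M)
  · exact hpred.mono (genBelow_le S s)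

theorem ModPredClosed.mod_lt_mod (h : ModPredClosed S m) (hm : m ∈ S) (hM : M ∈ msg S)
    (hMm : M ≠ m) {s : ℕ} (hs : s ∈ S) (hsM : s < M) : s % m < M % m := by
  by_contra! hle
  obtain ⟨y, hy, hys, hmod⟩ := h.exists_le_mod_eq hs hle
  exact (hys.trans_lt hsM).ne
    (eq_of_mem_msg_of_modEq hm hM hMm hy (hys.trans hsM.le) hmod)

theorem lt_aperyW_genBelow (hT : (genBelow S M : Set ℕ)ᶜ.Finite) (hm : m ∈ S) (hm0 : m ≠ 0)
    (hM : M ∈ msg S) (hMm : M ≠ m) : M < aperyW (genBelow S M) m M := by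
  obtain ⟨hmem, hmod⟩ := aperyW_spec hT hm0 M
  by_contra! hle
  have heq := eq_of_mem_msg_of_modEq hm hM hMm (genBelow_le S M hmem) hle hmod
  exact notMem_closure_of_mem_msg hM (fun _ hx => hx.1.1) (fun hx => lt_irrefl M hx.2)
    (heq ▸ hmem)

theorem isMANS_iff_isMANS_genBelow (hS : IsNumSgp S) (hM : IsGreatest (msg S) M) {g : ℕ}
    (hg : g ∈ msg S) (hmg : nsMult S < g) (hgM : g < M) :
    IsMANS S ↔ IsMANS (genBelow S M) ∧
      aperyW (genBelow S M) (nsMult S) (M % nsMult S - 1) < M := by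
  obtain ⟨hmS, hm0, -⟩ := hS.nsMult_mem_msg
  have hmT : nsMult S ∈ genBelow S M := mem_genBelow_of_lt hmS (hmg.trans hgM)
  have hmult := nsMult_eq_of_subset (genBelow_le S M) hmT hm0
  have hMm : ¬nsMult S ∣ M := not_dvd_of_mem_msg hmS hM.1 (hmg.trans hgM).ne'
  rw [isMANS_iff_modPredClosed hS]
  constructor
  · intro h
    have hclosed := modPredClosed_genBelow (M := M) h
    have hT : IsNumSgp (genBelow S M) := hclosed.isNumSgp hmT (mem_genBelow_of_lt hg.1 hgM)
      (not_dvd_of_mem_msg hmS hg hmg.ne')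
    rw [isMANS_iff_modPredClosed hT, hmult, ← hasModPred_iff_aperyW_lt hT.2.2 hm0 hMm]
    exact ⟨hclosed, hasModPred_genBelow (h M hM.1.1 hMm) le_rfl⟩
  · rintro ⟨hT, hlt⟩
    rw [← hasModPred_iff_aperyW_lt hT.1.2.2 hm0 hMm] at hlt
    rw [isMANS_iff_modPredClosed hT.1, hmult] at hT
    exact modPredClosed_of_genBelow hM.2 hT hlt

end GenBelow

theorem stmt18 (S : Set ℕ) (e : ℕ) (he : 2 ≤ e) (n : Fin (e + 1) → ℕ)
    (hS : IsNumSgp S) (hmono : StrictMono n) (hmsg : msg S = Set.range n)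
    (S' : Set ℕ) (hS' : S' = gen (Set.range fun i : Fin e => n i.castSucc)) :
    IsMANS S ↔
      IsMANS S' ∧
      n ⟨e - 1, by omega⟩ % n 0 < n ⟨e, by omega⟩ % n 0 ∧
      aperyW S' (n 0) (n ⟨e, by omega⟩ % n 0 - 1) < n ⟨e, by omega⟩ ∧
      n ⟨e, by omega⟩ < aperyW S' (n 0) (n ⟨e, by omega⟩ % n 0) := by
  have hmem (i : Fin (e + 1)) : n i ∈ msg S := hmsg ▸ Set.mem_range_self i
  have hleast : IsLeast (msg S) (n 0) :=
    ⟨hmem 0, hmsg ▸ Set.forall_mem_range.2 fun i => hmono.monotone (Fin.zero_le i)⟩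
  have hM : IsGreatest (msg S) (n (Fin.last e)) :=
    ⟨hmem _, hmsg ▸ Set.forall_mem_range.2 fun i => hmono.monotone (Fin.le_last i)⟩
  have hmg : n 0 < n ⟨e - 1, by omega⟩ := hmono (Fin.mk_lt_mk.2 (by omega : 0 < e - 1))
  have hgM : n ⟨e - 1, by omega⟩ < n (Fin.last e) := hmono (Fin.mk_lt_mk.2 (by omega))
  have hMm := (hmg.trans hgM).ne'
  have hT : S' = genBelow S (n (Fin.last e)) := by
    rw [hS', range_castSucc_eq_inter_Iio hmono, ← hmsg, gen, genBelow]
  lift S to AddSubmonoid ℕ using ⟨hS.1, fun ha hb => hS.2.1 _ ha _ hb⟩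
  have hmult := nsMult_eq_of_isLeast_msg hleast
  have hMANS := isMANS_iff_isMANS_genBelow hS hM (hmem _) (hmult ▸ hmg) hgM
  rw [hmult, ← hT] at hMANS
  refine ⟨fun h => ?_, fun ⟨hMANS', _, hlt, _⟩ => hMANS.2 ⟨hMANS', hlt⟩⟩
  have hclosed : ModPredClosed S (n 0) := hmult ▸ (isMANS_iff_modPredClosed hS).1 h
  obtain ⟨hMANS', hlt⟩ := hMANS.1 h
  refine ⟨hMANS', hclosed.mod_lt_mod hleast.1.1 hM.1 hMm (hmem _).1 hgM, hlt, ?_⟩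
  rw [aperyW_mod, hT]
  exact lt_aperyW_genBelow (hT ▸ hMANS'.1.2.2) hleast.1.1 hleast.1.2.1 hM.1 hMm
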